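/- arXiv:1611.00841 — 7 statements merged into one kernel-verified Lean document; each statement's English description precedes it below -/
import Mathlib

section
/- Let G be a group acting on the vertex type X of a connected simple graph Γ by graph automorphisms (i.e. for all g ∈ G and vertices a, b, a and b are adjacent in Γ if and only if g•a and g•b are adjacent). Let V ⊆ X × X be a set of pairs of vertices. Suppose there is a vertex c ∈ X such that: (1) the set of pairs (a,b) ∈ V with both a and b in the orbit G·c is contained in finitely many orbits of the diagonal G-action on X × X; and (2) for all a, b ∈ G·c with (a,b) ∉ V there exists d ∈ G·c with (a,d) ∈ V and (b,d) ∈ V. Then every G-orbit in X has finite diameter with respect to the graph metric: for every x ∈ X there exists D ∈ ℕ such that d_Γ(g•x, h•x) ≤ D for all g, h ∈ G. -/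
/-- Proposition 4.1 of the paper (criterion for finite-diameter orbits), in the
setting of a group `G` acting by automorphisms on a connected simple graph `Γ`. -/
theorem finite_diameter_orbits_criterion {G X : Type*} [Group G] [MulAction G X]
    (Γ : SimpleGraph X) (hconn : Γ.Connected)
    (hact : ∀ (g : G) (a b : X), Γ.Adj a b ↔ Γ.Adj (g • a) (g • b))
    (V : Set (X × X)) (c : X)
    (h1 : ∃ F : Finset (X × X), ∀ p ∈ V,
      p.1 ∈ MulAction.orbit G c → p.2 ∈ MulAction.orbit G c →
        ∃ q ∈ F, p ∈ MulAction.orbit G q)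
    (h2 : ∀ a ∈ MulAction.orbit G c, ∀ b ∈ MulAction.orbit G c, (a, b) ∉ V →
      ∃ d ∈ MulAction.orbit G c, (a, d) ∈ V ∧ (b, d) ∈ V) :
    ∀ x : X, ∃ D : ℕ, ∀ g h : G, Γ.dist (g • x) (h • x) ≤ D := by
  have hle : ∀ (g : G) (a b : X), Γ.dist (g • a) (g • b) ≤ Γ.dist a b := by
    intro g a b
    obtain ⟨w, hw⟩ := hconn.exists_walk_length_eq_dist a b
    let f : Γ →g Γ := ⟨fun y => g • y, fun {a b} h => (hact g a b).1 h⟩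
    have h := SimpleGraph.dist_le (w.map f)
    rw [SimpleGraph.Walk.length_map, hw] at h
    exact h
  obtain ⟨F, hF⟩ := h1
  have hV : ∀ a ∈ MulAction.orbit G c, ∀ b ∈ MulAction.orbit G c, (a, b) ∈ V →
      Γ.dist a b ≤ F.sup (fun q => Γ.dist q.1 q.2) := by
    intro a ha b hb hab
    obtain ⟨q, hq, g, hg⟩ := hF (a, b) hab ha hb
    have h3 : g • q.1 = a := congrArg Prod.fst hg
    have h4 : g • q.2 = b := congrArg Prod.snd hg
    rw [← h3, ← h4]
    exact (hle g _ _).trans (Finset.le_sup (f := fun q : X × X => Γ.dist q.1 q.2) hq)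
  set M := F.sup (fun q => Γ.dist q.1 q.2) with hM
  have hc : ∀ a ∈ MulAction.orbit G c, ∀ b ∈ MulAction.orbit G c, Γ.dist a b ≤ 2 * M := by
    intro a ha b hb
    by_cases hab : (a, b) ∈ V
    · have := hV a ha b hb hab
      omega
    · obtain ⟨d, hd, h5, h6⟩ := h2 a ha b hb hab
      have h7 := hV a ha d hd h5
      have h8 := hV b hb d hd h6
      have h9 : Γ.dist a b ≤ Γ.dist a d + Γ.dist d b := hconn.dist_triangle
      rw [SimpleGraph.dist_comm (u := d)] at h9
      omega
  intro x
  refine ⟨2 * M + 2 * Γ.dist x c, fun g h => ?_⟩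
  have e1 := hle g x c
  have e2 := hle h c x
  have e3 := hc (g • c) ⟨g, rfl⟩ (h • c) ⟨h, rfl⟩
  have e4 : Γ.dist (g • x) (h • x) ≤ Γ.dist (g • x) (g • c) + Γ.dist (g • c) (h • x) :=
    hconn.dist_triangle
  have e5 : Γ.dist (g • c) (h • x) ≤ Γ.dist (g • c) (h • c) + Γ.dist (h • c) (h • x) :=
    hconn.dist_triangle
  rw [SimpleGraph.dist_comm (u := c) (v := x)] at e2
  omega
end

section
/- Let Γ be a connected simple graph on a vertex type X, let Y ⊆ X be such that the induced subgraph Γ[Y] is connected, and let A, B ∈ ℕ. Suppose r is an (A,B)-quasi-retract of Γ onto Y, i.e. r assigns to each vertex x ∈ X a nonempty subset r(x) ⊆ Y such that: (i) the diameter of r(x) with respect to d_{Γ[Y]} is at most A for every x ∈ X; (ii) whenever x = x' or x and x' are adjacent in Γ, there exist p ∈ r(x) and q ∈ r(x') with d_{Γ[Y]}(p,q) ≤ B; and (iii) r(y) = {y} for every y ∈ Y. Then the inclusion of Γ[Y] into Γ is a quasi-isometric embedding with multiplicative constant 2A+B: for all y, y' ∈ Y, d_Γ(y,y') ≤ d_{Γ[Y]}(y,y')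 ≤ (2A+B) · d_Γ(y,y'). -/
/-- Graph form of Lemma 5.2: an `(A,B)`-quasi-retract of a connected graph `Γ` onto a
subset `Y` (with connected induced subgraph) makes the inclusion of `Γ[Y]` into `Γ` a
quasi-isometric embedding with multiplicative constant `2A + B`. -/
theorem quasi_retract_quasi_isometric_embedding {X : Type*} (Γ : SimpleGraph X)
    (hconn : Γ.Connected) (Y : Set X) (hYconn : (Γ.induce Y).Connected)
    (A B : ℕ) (r : X → Set Y)
    (hne : ∀ x : X, (r x).Nonempty)
    (hdiam : ∀ x : X, ∀ p ∈ r x, ∀ q ∈ r x, (Γ.induce Y).dist p q ≤ A)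
    (hlip : ∀ x x' : X, (x = x' ∨ Γ.Adj x x') →
      ∃ p ∈ r x, ∃ q ∈ r x', (Γ.induce Y).dist p q ≤ B)
    (hretr : ∀ y : Y, r (y : X) = {y}) :
    ∀ y y' : Y, Γ.dist (y : X) (y' : X) ≤ (Γ.induce Y).dist y y' ∧
      (Γ.induce Y).dist y y' ≤ (2 * A + B) * Γ.dist (y : X) (y' : X) := by
  intro y y'
  constructor
  · obtain ⟨w, hw⟩ := hYconn.exists_walk_length_eq_dist y y'
    rw [← hw, ← SimpleGraph.Walk.length_map (SimpleGraph.Embedding.induce Y).toHom w]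
    exact SimpleGraph.dist_le _
  · have key : ∀ (u v : X) (w : Γ.Walk u v), v = (y' : X) → ∀ p ∈ r u,
        (Γ.induce Y).dist p y' ≤ (2 * A + B) * w.length := by
      intro u v w
      induction w with
      | nil =>
        intro hv p hp
        subst hv
        rw [hretr] at hp
        have hp' : p = y' := hp
        subst hp'
        simp
      | cons h w ih =>
        intro hv p hp
        obtain ⟨p₁, hp₁, q₁, hq₁, hB⟩ := hlip _ _ (Or.inr h)
        have h1 := hdiam _ p hp p₁ hp₁
        have h2 := ih hv q₁ hq₁
        have t1 := hYconn.dist_triangle (u := p) (v := p₁) (w := y')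
        have t2 := hYconn.dist_triangle (u := p₁) (v := q₁) (w := y')
        rw [SimpleGraph.Walk.length_cons, mul_add, mul_one]
        omega
    obtain ⟨w, hw⟩ := hconn.exists_walk_length_eq_dist (y : X) (y' : X)
    rw [← hw]
    exact key _ _ w rfl y (by rw [hretr]; rfl)
end

section
/- Let Γ be a connected simple graph on a vertex type X, let Y ⊆ X be such that the induced subgraph Γ[Y] is connected, and let A, B ∈ ℕ. Suppose there is an (A,B)-quasi-retract r of Γ onto Y, i.e. r assigns to each vertex x ∈ X a nonempty subset r(x) ⊆ Y such that: (i) the diameter of r(x) with respect to d_{Γ[Y]} is at most A for every x ∈ X; (ii) whenever x = x' or x and x' are adjacent in Γ, there exist p ∈ r(x) and q ∈ r(x') with d_{Γ[Y]}(p,q) ≤ B; and (iii) r(y) = {y} for every y ∈ Y. If Γ[Y] has infinite diameter (for every n ∈ ℕ there exist y, y' ∈ Y with d_{Γ[Y]}(y,y') ≥ n), then Γ has infinite diameter (for every n ∈ ℕ there exist u, v ∈ X with d_Γ(u,v) ≥ n). -/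
/-- Graph form of Corollary 5.3: if a connected graph `Γ` admits an `(A,B)`-quasi-retract
onto a subset `Y` whose induced subgraph is connected and has infinite diameter, then `Γ`
has infinite diameter. -/
theorem quasi_retract_infinite_diameter {X : Type*} (Γ : SimpleGraph X)
    (hconn : Γ.Connected) (Y : Set X) (hYconn : (Γ.induce Y).Connected)
    (A B : ℕ) (r : X → Set Y)
    (hne : ∀ x : X, (r x).Nonempty)
    (hdiam : ∀ x : X, ∀ p ∈ r x, ∀ q ∈ r x, (Γ.induce Y).dist p q ≤ A)
    (hlip : ∀ x x' : X, (x = x' ∨ Γ.Adj x x') →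
      ∃ p ∈ r x, ∃ q ∈ r x', (Γ.induce Y).dist p q ≤ B)
    (hretr : ∀ y : Y, r (y : X) = {y})
    (hinf : ∀ n : ℕ, ∃ y y' : Y, n ≤ (Γ.induce Y).dist y y') :
    ∀ n : ℕ, ∃ u v : X, n ≤ Γ.dist u v := by
  have key : ∀ (u v : X) (w : Γ.Walk u v), ∀ p ∈ r u, ∀ q ∈ r v,
      (Γ.induce Y).dist p q ≤ A + w.length * (A + B) := by
    intro u v w
    induction w with
    | nil =>
      intro p hp q hq
      have := hdiam _ p hp q hq
      simpa using this
    | @cons a b c h w ih =>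
      intro p hp q hq
      obtain ⟨p', hp', q', hq', hB⟩ := hlip a b (Or.inr h)
      have h1 := hdiam a p hp p' hp'
      have h2 := ih q' hq' q hq
      have t1 := hYconn.dist_triangle (u := p) (v := p') (w := q)
      have t2 := hYconn.dist_triangle (u := p') (v := q') (w := q)
      rw [SimpleGraph.Walk.length_cons, add_mul]
      omega
  intro n
  obtain ⟨y, y', hy⟩ := hinf (A + n * (A + B) + 1)
  refine ⟨y, y', ?_⟩
  obtain ⟨w, hw⟩ := hconn.exists_walk_length_eq_dist (y : X) (y' : X)
  have h := key _ _ w y (by rw [hretr]; rfl) y' (by rw [hretr]; rfl)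
  rw [hw] at h
  by_contra hlt
  have h3 : Γ.dist (y : X) y' * (A + B) ≤ n * (A + B) :=
    Nat.mul_le_mul_right _ (by omega)
  omega
end

section
/- Let Γ be a connected simple graph on a vertex type X and let δ ∈ ℕ. Let 𝒴 be a family of subsets of X such that: (1) for each Y ∈ 𝒴 the induced subgraph Γ[Y] is connected; (2) each Γ[Y] is δ-hyperbolic (every geodesic triangle of Γ[Y] is δ-slim with respect to d_{Γ[Y]}); and (3) for every geodesic triangle of Γ, i.e. every triple of geodesic walks of Γ joining x to y, y to z, and z to x for some vertices x, y, z, there exists Y ∈ 𝒴 containing all vertices of the three walks. Then Γ is δ-hyperbolic: every geodesic triangle of Γ is δ-slim with respect to d_Γ. -/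
/-- A walk is geodesic if its length equals the graph distance between its endpoints. -/
def SimpleGraph.IsGeodesicWalk {V : Type*} (G : SimpleGraph V) {u v : V}
    (W : G.Walk u v) : Prop :=
  W.length = G.dist u v

/-- A triple of walks joining `x` to `y`, `y` to `z`, and `z` to `x` is `δ`-slim if every
vertex on one of the walks is within graph distance `δ` of the set of vertices on the union
of the other two walks. -/
def SimpleGraph.IsSlimTriangle {V : Type*} (G : SimpleGraph V) (δ : ℕ) {x y z : V}
    (W₁ : G.Walk x y) (W₂ : G.Walk y z) (W₃ : G.Walk z x) : Prop :=
  (∀ p ∈ W₁.support, ∃ q, (q ∈ W₂.support ∨ q ∈ W₃.support) ∧ G.dist p q ≤ δ) ∧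
  (∀ p ∈ W₂.support, ∃ q, (q ∈ W₁.support ∨ q ∈ W₃.support) ∧ G.dist p q ≤ δ) ∧
  (∀ p ∈ W₃.support, ∃ q, (q ∈ W₁.support ∨ q ∈ W₂.support) ∧ G.dist p q ≤ δ)

/-- A graph is `δ`-hyperbolic if every geodesic triangle is `δ`-slim. -/
def SimpleGraph.IsHyperbolic {V : Type*} (G : SimpleGraph V) (δ : ℕ) : Prop :=
  ∀ {x y z : V} (W₁ : G.Walk x y) (W₂ : G.Walk y z) (W₃ : G.Walk z x),
    G.IsGeodesicWalk W₁ → G.IsGeodesicWalk W₂ → G.IsGeodesicWalk W₃ →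
      G.IsSlimTriangle δ W₁ W₂ W₃

theorem SimpleGraph.dist_le_dist_induce {V : Type*} (G : SimpleGraph V) (Y : Set V)
    (hY : (G.induce Y).Connected) (p q : Y) : G.dist p q ≤ (G.induce Y).dist p q := by
  obtain ⟨W, hW⟩ := hY.exists_walk_length_eq_dist p q
  rw [← hW, ← SimpleGraph.Walk.length_map (SimpleGraph.Embedding.induce Y).toHom W]
  exact SimpleGraph.dist_le _

theorem SimpleGraph.IsGeodesicWalk.induce {V : Type*} {G : SimpleGraph V} {Y : Set V}
    (hY : (G.induce Y).Connected) {u v : V} (W : G.Walk u v) (hW : ∀ p ∈ W.support, p ∈ Y)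
    (h : G.IsGeodesicWalk W) : (G.induce Y).IsGeodesicWalk (W.induce Y hW) := by
  have hl : (W.induce Y hW).length = W.length := by
    conv_rhs => rw [← W.map_induce hW]
    exact (SimpleGraph.Walk.length_map _ _).symm
  unfold SimpleGraph.IsGeodesicWalk at *
  apply le_antisymm
  · rw [hl, h]
    exact G.dist_le_dist_induce Y hY ⟨u, _⟩ ⟨v, _⟩
  · exact SimpleGraph.dist_le _

theorem SimpleGraph.mem_support_induce_iff {V : Type*} {G : SimpleGraph V} {Y : Set V}
    {u v : V} (W : G.Walk u v) (hW : ∀ p ∈ W.support, p ∈ Y) (p : Y) :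
    p ∈ (W.induce Y hW).support ↔ (p : V) ∈ W.support := by
  simp [SimpleGraph.Walk.support_induce]

/-- Graph form of Lemma 5.5: a connected graph admitting a `δ`-hyperbolic cover (a family of
subsets with connected, `δ`-hyperbolic induced subgraphs such that every geodesic triangle is
contained in some member) is itself `δ`-hyperbolic. -/
theorem hyperbolic_cover_implies_hyperbolic {X : Type*} (Γ : SimpleGraph X)
    (hconn : Γ.Connected) (δ : ℕ) (𝒴 : Set (Set X))
    (h1 : ∀ Y ∈ 𝒴, (Γ.induce Y).Connected)
    (h2 : ∀ Y ∈ 𝒴, (Γ.induce Y).IsHyperbolic δ)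
    (h3 : ∀ (x y z : X) (W₁ : Γ.Walk x y) (W₂ : Γ.Walk y z) (W₃ : Γ.Walk z x),
      Γ.IsGeodesicWalk W₁ → Γ.IsGeodesicWalk W₂ → Γ.IsGeodesicWalk W₃ →
        ∃ Y ∈ 𝒴, (∀ p ∈ W₁.support, p ∈ Y) ∧ (∀ p ∈ W₂.support, p ∈ Y) ∧
          (∀ p ∈ W₃.support, p ∈ Y)) :
    Γ.IsHyperbolic δ := by
  intro x y z W₁ W₂ W₃ g₁ g₂ g₃
  obtain ⟨Y, hY, s₁, s₂, s₃⟩ := h3 x y z W₁ W₂ W₃ g₁ g₂ g₃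
  have hc := h1 Y hY
  obtain ⟨t₁, t₂, t₃⟩ := h2 Y hY (W₁.induce Y s₁) (W₂.induce Y s₂) (W₃.induce Y s₃)
    (g₁.induce hc W₁ s₁) (g₂.induce hc W₂ s₂) (g₃.induce hc W₃ s₃)
  simp only [SimpleGraph.mem_support_induce_iff] at t₁ t₂ t₃
  refine ⟨fun p hp => ?_, fun p hp => ?_, fun p hp => ?_⟩
  · obtain ⟨q, hq, hd⟩ := t₁ ⟨p, s₁ p hp⟩ hp
    exact ⟨q, hq, (Γ.dist_le_dist_induce Y hc ⟨p, _⟩ q).trans hd⟩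
  · obtain ⟨q, hq, hd⟩ := t₂ ⟨p, s₂ p hp⟩ hp
    exact ⟨q, hq, (Γ.dist_le_dist_induce Y hc ⟨p, _⟩ q).trans hd⟩
  · obtain ⟨q, hq, hd⟩ := t₃ ⟨p, s₃ p hp⟩ hp
    exact ⟨q, hq, (Γ.dist_le_dist_induce Y hc ⟨p, _⟩ q).trans hd⟩
end

section
/- Let Γ be a connected simple graph on a vertex type X and let A, B ∈ ℕ. Let 𝒴 be a family of subsets of X covering X such that: (1) for each Y ∈ 𝒴 the induced subgraph Γ[Y] is connected; (2) for each Y ∈ 𝒴 there exists an (A,B)-quasi-retract of Γ onto Y (a map r assigning to each x ∈ X a nonempty subset r(x) ⊆ Y with d_{Γ[Y]}-diameter at most A, such that whenever x = x' or x and x' are adjacent in Γ there exist p ∈ r(x), q ∈ r(x') with d_{Γ[Y]}(p,q) ≤ B, and such that r(y) = {y} for every y ∈ Y); and (3) for every geodesic triangle of Γ there exists Y ∈ 𝒴 containing all vertices of its three walks. Then Γ is Gromov hyperbolic (δ-hyperbolic for some δ ∈ ℕ) if and only if there exists δ ∈ ℕ such that every induced subgraph Γ[Y] for Y ∈ 𝒴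 is δ-hyperbolic. -/
/-- An `(A,B)`-quasi-retract of `Γ` onto a subset `Y`. -/
def SimpleGraph.IsQuasiRetract {X : Type*} (Γ : SimpleGraph X) (Y : Set X)
    (A B : ℕ) (r : X → Set Y) : Prop :=
  (∀ x : X, (r x).Nonempty) ∧
  (∀ x : X, ∀ p ∈ r x, ∀ q ∈ r x, (Γ.induce Y).dist p q ≤ A) ∧
  (∀ x x' : X, (x = x' ∨ Γ.Adj x x') →
    ∃ p ∈ r x, ∃ q ∈ r x', (Γ.induce Y).dist p q ≤ B) ∧
  (∀ y : Y, r (y : X) = {y})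

namespace HypCover
open SimpleGraph

/-- Interval form of slim triangles. -/
def Slim {V : Type*} (G : SimpleGraph V) (δ : ℕ) : Prop :=
  ∀ x y z p : V, G.dist x p + G.dist p y = G.dist x y →
    ∃ q, (G.dist y q + G.dist q z = G.dist y z ∨ G.dist z q + G.dist q x = G.dist z x) ∧
      G.dist p q ≤ δ

lemma mem_interval {V : Type*} {G : SimpleGraph V} (hG : G.Connected) {x y p : V}
    (W : G.Walk x y) (hW : G.IsGeodesicWalk W) (hp : p ∈ W.support) :
    G.dist x p + G.dist p y = G.dist x y := by
  classical
  have h := congrArg Walk.length (W.take_spec hp)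
  rw [Walk.length_append] at h
  have h1 := dist_le (W.takeUntil p hp)
  have h2 := dist_le (W.dropUntil p hp)
  have h3 := hG.dist_triangle (u := x) (v := p) (w := y)
  unfold SimpleGraph.IsGeodesicWalk at hW
  omega

lemma slim_of_hyp {V : Type*} {G : SimpleGraph V} (hG : G.Connected) {δ : ℕ}
    (h : G.IsHyperbolic δ) : Slim G δ := by
  intro x y z p hp
  obtain ⟨W1, hW1⟩ := hG.exists_walk_length_eq_dist x p
  obtain ⟨W2, hW2⟩ := hG.exists_walk_length_eq_dist p y
  obtain ⟨U, hU⟩ := hG.exists_walk_length_eq_dist y z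
  obtain ⟨T, hT⟩ := hG.exists_walk_length_eq_dist z x
  have hg : G.IsGeodesicWalk (W1.append W2) := by
    unfold SimpleGraph.IsGeodesicWalk
    rw [Walk.length_append]; omega
  obtain ⟨q, hq, hd⟩ := (h (W1.append W2) U T hg hU hT).1 p (by simp)
  refine ⟨q, ?_, hd⟩
  rcases hq with hq | hq
  · exact Or.inl (mem_interval hG U hU hq)
  · exact Or.inr (mem_interval hG T hT hq)

/-- A point at prescribed distance on a geodesic. -/
lemma exists_between {V : Type*} {G : SimpleGraph V} (hG : G.Connected) (x y : V) (t : ℕ)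
    (ht : t ≤ G.dist x y) : ∃ p, G.dist x p = t ∧ G.dist p y + t = G.dist x y := by
  obtain ⟨W, hW⟩ := hG.exists_walk_length_eq_dist x y
  have h1 := dist_le (W.take t)
  have h2 := dist_le (W.drop t)
  have h3 := hG.dist_triangle (u := x) (v := W.getVert t) (w := y)
  rw [Walk.take_length] at h1
  rw [Walk.drop_length] at h2
  refine ⟨W.getVert t, ?_, ?_⟩ <;> omega

lemma lip {V : Type*} {G : SimpleGraph V} (hG : G.Connected) {f : ℕ → V}
    (hf : ∀ i, G.dist (f i) (f (i + 1)) ≤ 1) (i k : ℕ) : G.dist (f i) (f (i + k)) ≤ k := by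
  induction k with
  | zero => simp
  | succ k ih =>
    have h3 := hG.dist_triangle (u := f i) (v := f (i + k)) (w := f (i + (k + 1)))
    have := hf (i + k)
    rw [← add_assoc] at *
    omega

/-- Geodesics stay logarithmically close to paths. -/
lemma log_close {V : Type*} {G : SimpleGraph V} (hG : G.Connected) {δ : ℕ} (hs : Slim G δ)
    {f : ℕ → V} (hf : ∀ i, G.dist (f i) (f (i + 1)) ≤ 1) (n : ℕ) :
    ∀ a b x, a ≤ b → b ≤ a + 2 ^ n → G.dist (f a) x + G.dist x (f b) = G.dist (f a) (f b) →
      ∃ i, a ≤ i ∧ i ≤ b ∧ G.dist x (f i) ≤ δ * n + 1 := by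
  induction n with
  | zero =>
    intro a b x hab hb hx
    obtain ⟨k, rfl⟩ := Nat.exists_eq_add_of_le hab
    have := lip hG hf a k
    refine ⟨a + k, hab, le_rfl, ?_⟩
    simp at hb ⊢
    omega
  | succ n ih =>
    intro a b x hab hb hx
    by_cases hc : b ≤ a + 2 ^ n
    · obtain ⟨i, h1, h2, h3⟩ := ih a b x hab hc hx
      exact ⟨i, h1, h2, by rw [mul_add]; omega⟩
    rw [pow_succ] at hb
    obtain ⟨q, hq, hd⟩ := hs (f a) (f b) (f (a + 2 ^ n)) x hx
    rcases hq with hq | hq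
    · obtain ⟨i, h1, h2, h3⟩ := ih (a + 2 ^ n) b q (by omega) (by omega) (by
        have e1 := G.dist_comm (u := f b) (v := q)
        have e2 := G.dist_comm (u := q) (v := f (a + 2 ^ n))
        have e3 := G.dist_comm (u := f b) (v := f (a + 2 ^ n))
        omega)
      have := hG.dist_triangle (u := x) (v := q) (w := f i)
      exact ⟨i, by omega, h2, by rw [mul_add]; omega⟩
    · obtain ⟨i, h1, h2, h3⟩ := ih a (a + 2 ^ n) q (by omega) (by omega) (by
        have e1 := G.dist_comm (u := f a) (v := q)
        have e2 := G.dist_comm (u := q) (v := f (a + 2 ^ n))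
        have e3 := G.dist_comm (u := f a) (v := f (a + 2 ^ n))
        omega)
      have := hG.dist_triangle (u := x) (v := q) (w := f i)
      exact ⟨i, h1, by omega, by rw [mul_add]; omega⟩

lemma exists_N (c d : ℕ) : ∃ N : ℕ, ∀ n, N ≤ n → c * n + d < 2 ^ n := by
  have key : ∀ m : ℕ, m * m ≤ 4 * 2 ^ m := by
    intro m
    induction m with
    | zero => simp
    | succ m ih =>
      by_cases h : m < 3
      · interval_cases m <;> norm_num
      · rw [pow_succ]; nlinarith
  refine ⟨4 * (c + d) + 5, fun n hn => ?_⟩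
  have := key n
  nlinarith

/-- The increments needed in the Morse lemma. -/
lemma exists_bound (δ K : ℕ) : ∃ D0 : ℕ, ∀ D,
    (∀ n, 6 * K * D ≤ 2 ^ n → D ≤ 3 * δ + δ * n + 1) → D ≤ D0 := by
  obtain ⟨N, hN⟩ := exists_N (12 * K * δ) (12 * K * (3 * δ + 1))
  refine ⟨3 * δ + δ * N + 1, fun D h => ?_⟩
  by_cases h0 : 6 * K * D ≤ 2 ^ N
  · exact h N h0
  push Not at h0
  have hm := h (Nat.clog 2 (6 * K * D)) (Nat.le_pow_clog (by norm_num) _)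
  have hlt : 1 < 6 * K * D := lt_of_le_of_lt Nat.one_le_two_pow h0
  have hp := Nat.pow_pred_clog_lt_self (b := 2) (by norm_num) hlt
  generalize Nat.clog 2 (6 * K * D) = n at hm hp
  by_cases hnN : n ≤ N
  · have := Nat.mul_le_mul_left δ hnN
    omega
  have h2 := hN n (by omega)
  obtain ⟨m, hm'⟩ : ∃ m, n = m + 1 := ⟨n - 1, by omega⟩
  subst hm'
  simp at hp
  rw [pow_succ] at h2
  have := Nat.mul_le_mul_left (12 * K) hm
  nlinarith

def QG {V : Type*} (G : SimpleGraph V) (K n : ℕ) (f : ℕ → V) : Prop :=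
  (∀ i, G.dist (f i) (f (i + 1)) ≤ 1) ∧
    ∀ i j, i ≤ j → j ≤ n → j ≤ i + K * G.dist (f i) (f j)

/-- Geodesics are close to quasigeodesics. -/
lemma morse1 {V : Type*} {G : SimpleGraph V} (hG : G.Connected) {δ : ℕ} (hs : Slim G δ)
    (K : ℕ) : ∃ D0, ∀ n f, QG G K n f → ∀ x,
      G.dist (f 0) x + G.dist x (f n) = G.dist (f 0) (f n) →
      ∃ i, i ≤ n ∧ G.dist x (f i) ≤ D0 := by
  classical
  obtain ⟨D0, hD0⟩ := exists_bound δ K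
  refine ⟨max D0 (2 * δ), fun n f ⟨hf, hq⟩ => ?_⟩
  have hex : ∃ D, ∀ x, G.dist (f 0) x + G.dist x (f n) = G.dist (f 0) (f n) →
      ∃ i, i ≤ n ∧ G.dist x (f i) ≤ D :=
    ⟨G.dist (f 0) (f n), fun x hx => ⟨n, le_rfl, by omega⟩⟩
  obtain ⟨D, hD, hmin⟩ : ∃ D, (∀ x, G.dist (f 0) x + G.dist x (f n) = G.dist (f 0) (f n) →
      ∃ i, i ≤ n ∧ G.dist x (f i) ≤ D) ∧ ∀ E < D, ¬ (∀ x, G.dist (f 0) x + G.dist x (f n) =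
        G.dist (f 0) (f n) → ∃ i, i ≤ n ∧ G.dist x (f i) ≤ E) :=
    ⟨Nat.find hex, Nat.find_spec hex, fun E hE => Nat.find_min hex hE⟩
  suffices hle : D ≤ max D0 (2 * δ) by
    intro x hx
    obtain ⟨i, hi, h⟩ := hD x hx
    exact ⟨i, hi, h.trans hle⟩
  by_contra hcon
  have hD1 : D0 < D := by omega
  have hD2 : 2 * δ < D := by omega
  have hlt : ¬ D ≤ D0 := by omega
  apply hlt
  apply hD0
  intro m hm
  by_contra hDm
  push Not at hDm
  -- a point at distance at least `D` from the path
  have h1 := hmin (D - 1) (by omega)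
  push Not at h1
  obtain ⟨x, hx, hfar⟩ := h1
  have hfar : ∀ i ≤ n, D ≤ G.dist x (f i) := fun i hi => by
    have := hfar i hi
    omega
  -- left point
  have left : ∃ y i, i ≤ n ∧ G.dist (f 0) y + G.dist y x = G.dist (f 0) x ∧
      G.dist y x ≤ 2 * D ∧ G.dist y (f i) ≤ D ∧
      ∀ p, G.dist y p + G.dist p (f i) = G.dist y (f i) → D ≤ G.dist x p := by
    by_cases hc : G.dist (f 0) x ≤ 2 * D
    · refine ⟨f 0, 0, by omega, by simp, hc, by simp, fun p hp => ?_⟩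
      rw [dist_self] at hp
      have : f 0 = p := (hG.dist_eq_zero_iff).1 (by omega)
      rw [← this]
      exact hfar 0 (by omega)
    · obtain ⟨y, hy1, hy2⟩ := exists_between hG (f 0) x (G.dist (f 0) x - 2 * D) (by omega)
      have t1 := hG.dist_triangle (u := f 0) (v := y) (w := f n)
      have t2 := hG.dist_triangle (u := y) (v := x) (w := f n)
      obtain ⟨i, hi, hi2⟩ := hD y (by omega)
      refine ⟨y, i, hi, by omega, by omega, hi2, fun p hp => ?_⟩
      have t3 := hG.dist_triangle (u := y) (v := p) (w := x)
      rw [G.dist_comm (u := p) (v := x)] at t3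
      omega
  have right : ∃ z j, j ≤ n ∧ G.dist x z + G.dist z (f n) = G.dist x (f n) ∧
      G.dist x z ≤ 2 * D ∧ G.dist z (f j) ≤ D ∧
      ∀ p, G.dist z p + G.dist p (f j) = G.dist z (f j) → D ≤ G.dist x p := by
    by_cases hc : G.dist x (f n) ≤ 2 * D
    · refine ⟨f n, n, by omega, by simp, hc, by simp, fun p hp => ?_⟩
      rw [dist_self] at hp
      have : f n = p := (hG.dist_eq_zero_iff).1 (by omega)
      rw [← this]
      exact hfar n (by omega)
    · obtain ⟨z, hz1, hz2⟩ := exists_between hG x (f n) (2 * D) (by omega)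
      have t1 := hG.dist_triangle (u := f 0) (v := z) (w := f n)
      have t2 := hG.dist_triangle (u := f 0) (v := x) (w := z)
      obtain ⟨i, hi, hi2⟩ := hD z (by omega)
      refine ⟨z, i, hi, by omega, by omega, hi2, fun p hp => ?_⟩
      have t3 := hG.dist_triangle (u := x) (v := p) (w := z)
      rw [G.dist_comm (u := p) (v := z)] at t3
      omega
  obtain ⟨y, i, hi, hy1, hy2, hy3, hy4⟩ := left
  obtain ⟨z, j, hj, hz1, hz2, hz3, hz4⟩ := right
  have hxyz : G.dist y x + G.dist x z = G.dist y z := by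
    have t1 := hG.dist_triangle (u := y) (v := x) (w := z)
    have t2 := hG.dist_triangle (u := f 0) (v := y) (w := f n)
    have t3 := hG.dist_triangle (u := y) (v := z) (w := f n)
    omega
  have hij : G.dist (f i) (f j) ≤ 6 * D := by
    have t1 := hG.dist_triangle (u := f i) (v := y) (w := f j)
    have t2 := hG.dist_triangle (u := y) (v := z) (w := f j)
    rw [G.dist_comm (u := f i) (v := y)] at t1
    omega
  -- first triangle `y, z, f i`
  obtain ⟨q, hq1, hq2⟩ := hs y z (f i) x hxyz
  rcases hq1 with hq1 | hq1
  swap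
  · have := hy4 q (by
      rw [G.dist_comm (u := f i) (v := q), G.dist_comm (u := q) (v := y),
        G.dist_comm (u := f i) (v := y)] at hq1
      omega)
    omega
  have hq1' : G.dist (f i) q + G.dist q z = G.dist (f i) z := by
    rw [G.dist_comm (u := z) (v := q), G.dist_comm (u := q) (v := f i),
        G.dist_comm (u := z) (v := f i)] at hq1
    omega
  obtain ⟨s, hs1, hs2⟩ := hs (f i) z (f j) q hq1'
  have hxs := hG.dist_triangle (u := x) (v := q) (w := s)
  rcases hs1 with hs1 | hs1
  · have := hz4 s hs1
    omega
  have hKD : K * G.dist (f i) (f j) ≤ 2 ^ m := by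
    refine le_trans ?_ hm
    have := Nat.mul_le_mul_left K hij
    nlinarith
  have : ∃ k, k ≤ n ∧ G.dist s (f k) ≤ δ * m + 1 := by
    rcases le_total i j with hle | hle
    · have := hq i j hle hj
      obtain ⟨k, _, h2, h3⟩ := log_close hG hs hf m i j s hle (by omega) (by
        rw [G.dist_comm (u := f j) (v := s), G.dist_comm (u := s) (v := f i),
          G.dist_comm (u := f j) (v := f i)] at hs1
        omega)
      exact ⟨k, by omega, h3⟩
    · have := hq j i hle hi
      rw [G.dist_comm] at this
      obtain ⟨k, _, h2, h3⟩ := log_close hG hs hf m j i s hle (by omega) hs1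
      exact ⟨k, by omega, h3⟩
  obtain ⟨k, hk, hk2⟩ := this
  have t := hG.dist_triangle (u := x) (v := s) (w := f k)
  have := hfar k hk
  omega

/-- Quasigeodesics are close to geodesics. -/
lemma morse2 {V : Type*} {G : SimpleGraph V} (hG : G.Connected) {δ : ℕ} (hs : Slim G δ)
    (K : ℕ) : ∃ D1, ∀ n f, QG G K n f → ∀ i ≤ n, ∃ x,
      G.dist (f 0) x + G.dist x (f n) = G.dist (f 0) (f n) ∧ G.dist (f i) x ≤ D1 := by
  obtain ⟨D0, hD0⟩ := morse1 hG hs K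
  refine ⟨K * (2 * D0 + 1) + D0, fun n f hf i hi => ?_⟩
  obtain ⟨W, hW⟩ := hG.exists_walk_length_eq_dist (f 0) (f n)
  have hmem : ∀ t, G.dist (f 0) (W.getVert t) + G.dist (W.getVert t) (f n)
      = G.dist (f 0) (f n) := fun t => mem_interval hG W hW (W.getVert_mem_support t)
  -- the first vertex close to the right part
  have hex : ∃ t, ∃ k, i ≤ k ∧ k ≤ n ∧ G.dist (W.getVert t) (f k) ≤ D0 :=
    ⟨W.length, n, hi, le_rfl, by simp⟩
  classical
  obtain ⟨k, hk1, hk2, hk3⟩ := Nat.find_spec hex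
  set t := Nat.find hex with ht
  refine ⟨W.getVert t, hmem t, ?_⟩
  have : ∃ j, j ≤ i ∧ G.dist (W.getVert t) (f j) ≤ D0 + 1 := by
    rcases Nat.eq_zero_or_pos t with h0 | h0
    · exact ⟨0, by omega, by simp [h0]⟩
    · have hnot := Nat.find_min hex (m := t - 1) (by omega)
      obtain ⟨j, hj, hj2⟩ := hD0 n f hf _ (hmem (t - 1))
      refine ⟨j, ?_, ?_⟩
      · by_contra hc
        exact hnot ⟨j, by omega, hj, hj2⟩
      · have t1 := hG.dist_triangle (u := W.getVert t) (v := W.getVert (t - 1)) (w := f j)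
        have : G.dist (W.getVert t) (W.getVert (t - 1)) ≤ 1 := by
          rw [G.dist_comm]
          obtain ⟨m, hm⟩ : ∃ m, t = m + 1 := ⟨t - 1, by omega⟩
          rw [hm]
          by_cases hl : m < W.length
          · exact (dist_eq_one_iff_adj.2 (W.adj_getVert_succ hl)).le
          · rw [W.getVert_of_length_le (by omega), W.getVert_of_length_le (by omega)]
            simp
        omega
  obtain ⟨j, hj, hj2⟩ := this
  have h1 := hf.2 j k (by omega) hk2
  have t1 := hG.dist_triangle (u := f j) (v := W.getVert t) (w := f k)
  have e1 := G.dist_comm (u := f j) (v := W.getVert t)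
  have h2 : K * G.dist (f j) (f k) ≤ K * (2 * D0 + 1) := Nat.mul_le_mul_left K (by omega)
  have h3 := lip hG hf.1 i (k - i)
  rw [Nat.add_sub_cancel' hk1] at h3
  have t2 := hG.dist_triangle (u := f i) (v := f k) (w := W.getVert t)
  have e2 := G.dist_comm (u := f k) (v := W.getVert t)
  omega

lemma retract_le {X : Type*} {Γ : SimpleGraph X} {Y : Set X} {A B : ℕ} {r : X → Set Y}
    (hY : (Γ.induce Y).Connected) (hr : Γ.IsQuasiRetract Y A B r) {x x' : X}
    (W : Γ.Walk x x') : ∀ p ∈ r x, ∀ q ∈ r x',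
      (Γ.induce Y).dist p q ≤ A + W.length * (A + B) := by
  obtain ⟨h1, h2, h3, h4⟩ := hr
  induction W with
  | nil => intro p hp q hq; simpa using h2 _ p hp q hq
  | cons h W ih =>
    intro p hp q hq
    obtain ⟨p', hp', q', hq', hd⟩ := h3 _ _ (Or.inr h)
    have a1 := h2 _ p hp p' hp'
    have a2 := ih q' hq' q hq
    have t1 := hY.dist_triangle (u := p) (v := p') (w := q)
    have t2 := hY.dist_triangle (u := p') (v := q') (w := q)
    rw [Walk.length_cons, add_mul]
    omega

lemma retract_dist {X : Type*} {Γ : SimpleGraph X} (hG : Γ.Connected) {Y : Set X} {A B : ℕ}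
    {r : X → Set Y} (hY : (Γ.induce Y).Connected) (hr : Γ.IsQuasiRetract Y A B r) (p q : Y) :
    (Γ.induce Y).dist p q ≤ (2 * A + B) * Γ.dist (p : X) q := by
  obtain ⟨W, hW⟩ := hG.exists_walk_length_eq_dist (p : X) q
  have h := retract_le hY hr W p (by rw [hr.2.2.2]; rfl) q (by rw [hr.2.2.2]; rfl)
  rw [hW] at h
  rcases Nat.eq_zero_or_pos (Γ.dist (p : X) q) with h0 | h0
  · have : p = q := Subtype.ext ((hG.dist_eq_zero_iff).1 h0)
    simp [this]
  · nlinarith [Nat.mul_le_mul_left A h0]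

lemma dist_induce_le {X : Type*} {Γ : SimpleGraph X} {Y : Set X}
    (hY : (Γ.induce Y).Connected) (p q : Y) :
    Γ.dist (p : X) q ≤ (Γ.induce Y).dist p q := by
  obtain ⟨W, hW⟩ := hY.exists_walk_length_eq_dist p q
  rw [← hW]
  have := dist_le (W.map (Embedding.induce Y).toHom)
  rw [Walk.length_map] at this
  exact this

lemma qg_of_geodesic {X : Type*} {Γ : SimpleGraph X} {Y : Set X} {K : ℕ}
    (hY : (Γ.induce Y).Connected)
    (hK : ∀ p q : Y, (Γ.induce Y).dist p q ≤ K * Γ.dist (p : X) q) {x y : Y}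
    (W : (Γ.induce Y).Walk x y) (hW : (Γ.induce Y).IsGeodesicWalk W) :
    QG Γ K W.length (fun i => (W.getVert i : X)) := by
  constructor
  · intro m
    by_cases hl : m < W.length
    · have := W.adj_getVert_succ hl
      exact (dist_eq_one_iff_adj.2 (show Γ.Adj _ _ from this)).le
    · simp only
      rw [W.getVert_of_length_le (by omega), W.getVert_of_length_le (by omega)]
      simp
  · intro i j hij hj
    have h1 := dist_le (W.take i)
    have h2 := dist_le (W.drop j)
    rw [Walk.take_length] at h1
    rw [Walk.drop_length] at h2
    have t1 := hY.dist_triangle (u := x) (v := W.getVert i) (w := y)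
    have t2 := hY.dist_triangle (u := W.getVert i) (v := W.getVert j) (w := y)
    have := hK (W.getVert i) (W.getVert j)
    unfold SimpleGraph.IsGeodesicWalk at hW
    simp only
    omega

/-- One side of the slim triangle condition. -/
lemma side {X : Type*} {Γ : SimpleGraph X} (hG : Γ.Connected) {δ : ℕ} (hs : Slim Γ δ) (K : ℕ) :
    ∃ D, ∀ Y : Set X, (Γ.induce Y).Connected →
      (∀ p q : Y, (Γ.induce Y).dist p q ≤ K * Γ.dist (p : X) q) →
      ∀ (x y z : Y) (W₁ : (Γ.induce Y).Walk x y) (W₂ : (Γ.induce Y).Walk y z)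
        (W₃ : (Γ.induce Y).Walk z x), (Γ.induce Y).IsGeodesicWalk W₁ →
        (Γ.induce Y).IsGeodesicWalk W₂ → (Γ.induce Y).IsGeodesicWalk W₃ →
        ∀ p ∈ W₁.support, ∃ q, (q ∈ W₂.support ∨ q ∈ W₃.support) ∧
          (Γ.induce Y).dist p q ≤ D := by
  obtain ⟨D0, hD0⟩ := morse1 hG hs K
  obtain ⟨D1, hD1⟩ := morse2 hG hs K
  refine ⟨K * (D1 + δ + D0), ?_⟩
  intro Y hY hK x y z W₁ W₂ W₃ g1 g2 g3 p hp
  obtain ⟨i, rfl, hi⟩ := Walk.mem_support_iff_exists_getVert.1 hp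
  obtain ⟨a, ha, ha2⟩ := hD1 _ _ (qg_of_geodesic hY hK W₁ g1) i hi
  simp only [Walk.getVert_zero, Walk.getVert_length] at ha ha2
  obtain ⟨b, hb, hb2⟩ := hs _ _ (z : X) a ha
  have t1 := hG.dist_triangle (u := (W₁.getVert i : X)) (v := a) (w := b)
  have fin : ∀ q : Y, Γ.dist b q ≤ D0 →
      (Γ.induce Y).dist (W₁.getVert i) q ≤ K * (D1 + δ + D0) := by
    intro q hq
    have t2 := hG.dist_triangle (u := (W₁.getVert i : X)) (v := b) (w := q)
    exact (hK _ _).trans (Nat.mul_le_mul_left K (by omega))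
  rcases hb with hb | hb
  · obtain ⟨j, hj, hj2⟩ := hD0 _ _ (qg_of_geodesic hY hK W₂ g2) b (by simpa using hb)
    exact ⟨W₂.getVert j, Or.inl (W₂.getVert_mem_support j), fin _ hj2⟩
  · obtain ⟨j, hj, hj2⟩ := hD0 _ _ (qg_of_geodesic hY hK W₃ g3) b (by simpa using hb)
    exact ⟨W₃.getVert j, Or.inr (W₃.getVert_mem_support j), fin _ hj2⟩

lemma geodesic_induce {X : Type*} {Γ : SimpleGraph X} {Y : Set X}
    (hY : (Γ.induce Y).Connected) {x y : X} (W : Γ.Walk x y) (hW : Γ.IsGeodesicWalk W)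
    (h : ∀ p ∈ W.support, p ∈ Y) : (Γ.induce Y).IsGeodesicWalk (W.induce Y h) := by
  have h1 := dist_induce_le hY ⟨x, h x (by simp)⟩ ⟨y, h y (by simp)⟩
  have h2 := dist_le (W.induce Y h)
  have h3 : (W.induce Y h).length = W.length := by
    have := congrArg Walk.length (W.map_induce h)
    rwa [Walk.length_map] at this
  unfold SimpleGraph.IsGeodesicWalk at *
  simp only at h1
  omega

lemma mem_support_induce {X : Type*} {Γ : SimpleGraph X} {Y : Set X}
    {x y : X} (W : Γ.Walk x y) (h : ∀ p ∈ W.support, p ∈ Y) (p : Y) :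
    p ∈ (W.induce Y h).support ↔ (p : X) ∈ W.support := by
  rw [Walk.support_induce]
  simp

end HypCover

/-- Graph form of Lemma 5.6: for a cover of a connected graph by uniform quasi-retracts
with connected induced subgraphs, containing all geodesic triangles, the graph is Gromov
hyperbolic if and only if the induced subgraphs on the cover elements are uniformly
hyperbolic. -/
theorem hyperbolic_iff_uniform_hyperbolic_cover {X : Type*} (Γ : SimpleGraph X)
    (hconn : Γ.Connected) (A B : ℕ) (𝒴 : Set (Set X))
    (hcover : ∀ x : X, ∃ Y ∈ 𝒴, x ∈ Y)
    (h1 : ∀ Y ∈ 𝒴, (Γ.induce Y).Connected)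
    (h2 : ∀ Y ∈ 𝒴, ∃ r : X → Set Y, Γ.IsQuasiRetract Y A B r)
    (h3 : ∀ (x y z : X) (W₁ : Γ.Walk x y) (W₂ : Γ.Walk y z) (W₃ : Γ.Walk z x),
      Γ.IsGeodesicWalk W₁ → Γ.IsGeodesicWalk W₂ → Γ.IsGeodesicWalk W₃ →
        ∃ Y ∈ 𝒴, (∀ p ∈ W₁.support, p ∈ Y) ∧ (∀ p ∈ W₂.support, p ∈ Y) ∧
          (∀ p ∈ W₃.support, p ∈ Y)) :
    (∃ δ : ℕ, Γ.IsHyperbolic δ) ↔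
      (∃ δ : ℕ, ∀ Y ∈ 𝒴, (Γ.induce Y).IsHyperbolic δ) := by
  constructor
  · rintro ⟨δ, hδ⟩
    obtain ⟨D, hD⟩ := HypCover.side hconn (HypCover.slim_of_hyp hconn hδ) (2 * A + B)
    refine ⟨D, fun Y hY => ?_⟩
    obtain ⟨r, hr⟩ := h2 Y hY
    have key := hD Y (h1 Y hY) (HypCover.retract_dist hconn (h1 Y hY) hr)
    intro x y z W₁ W₂ W₃ g1 g2 g3
    refine ⟨key x y z W₁ W₂ W₃ g1 g2 g3, fun p hp => ?_, key z x y W₃ W₁ W₂ g3 g1 g2⟩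
    obtain ⟨q, hq, hd⟩ := key y z x W₂ W₃ W₁ g2 g3 g1 p hp
    exact ⟨q, hq.symm, hd⟩
  · rintro ⟨δ, hδ⟩
    refine ⟨δ, ?_⟩
    intro x y z W₁ W₂ W₃ g1 g2 g3
    obtain ⟨Y, hY, m1, m2, m3⟩ := h3 x y z W₁ W₂ W₃ g1 g2 g3
    have hc := h1 Y hY
    obtain ⟨s1, s2, s3⟩ := hδ Y hY (W₁.induce Y m1) (W₂.induce Y m2) (W₃.induce Y m3)
      (HypCover.geodesic_induce hc W₁ g1 m1) (HypCover.geodesic_induce hc W₂ g2 m2)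
      (HypCover.geodesic_induce hc W₃ g3 m3)
    simp only [HypCover.mem_support_induce] at s1 s2 s3
    refine ⟨fun p hp => ?_, fun p hp => ?_, fun p hp => ?_⟩
    · obtain ⟨q, hq, hd⟩ := s1 ⟨p, m1 p hp⟩ hp
      exact ⟨q, hq, (HypCover.dist_induce_le hc _ _).trans hd⟩
    · obtain ⟨q, hq, hd⟩ := s2 ⟨p, m2 p hp⟩ hp
      exact ⟨q, hq, (HypCover.dist_induce_le hc _ _).trans hd⟩
    · obtain ⟨q, hq, hd⟩ := s3 ⟨p, m3 p hp⟩ hp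
      exact ⟨q, hq, (HypCover.dist_induce_le hc _ _).trans hd⟩
end

section
/- Let α be a countable ordinal with α ≥ 1, let n ≥ 1 be a natural number, and let E be the ordinal space [0, ω^α · n], i.e. the set of ordinals ≤ ω^α · n with its order topology. Suppose 𝒫 is a finite collection of pairwise disjoint, nonempty, closed, proper subsets of E that is invariant under homeomorphisms of E: for every homeomorphism φ : E → E and every P ∈ 𝒫, the image φ(P) belongs to 𝒫. Then 𝒫 has at most n elements. -/
open Set Order Ordinal in
theorem aux_clopen {a y : Ordinal} (ha : ¬ IsSuccLimit a) : IsClopen (Icc a (a + y)) := by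
  refine ⟨isClosed_Icc, ?_⟩
  rw [SuccOrder.isOpen_iff]
  intro o ho hl
  have hao : a < o := lt_of_le_of_ne ho.1 (by rintro rfl; exact ha hl)
  exact ⟨a, hao, fun x hx => ⟨hx.1.le, hx.2.le.trans ho.2⟩⟩

open Set Order Ordinal in
theorem aux_shift (a b : Ordinal) : Continuous (fun x : Ordinal => b + (x - a)) := by
  have h1 : Continuous (fun x : Ordinal => x - a) := by
    rw [OrderTopology.continuous_iff]
    intro t
    constructor
    · have : (fun x : Ordinal => x - a) ⁻¹' Ioi t = Ioi (a + t) := by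
        ext x
        simp [Ordinal.lt_sub]
      rw [this]
      exact isOpen_Ioi
    · rcases eq_or_ne t 0 with rfl | ht
      · have : (fun x : Ordinal => x - a) ⁻¹' Iio 0 = ∅ := by
          ext x
          simp
        rw [this]
        exact isOpen_empty
      · have : (fun x : Ordinal => x - a) ⁻¹' Iio t = Iio (a + t) := by
          ext x
          simp only [mem_preimage, mem_Iio]
          rcases le_total a x with h | h
          · exact Ordinal.sub_lt_of_le h
          · rw [Ordinal.sub_eq_zero_iff_le.2 h]
            have ht' : 0 < t := pos_iff_ne_zero.2 ht
            refine ⟨fun _ => h.trans_lt ?_, fun _ => ht'⟩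
            simpa using ht'
        rw [this]
        exact isOpen_Iio
  exact (Ordinal.isNormal_add_right b).continuous.comp h1

open Set Order Ordinal in
theorem aux_swap {N a b y : Ordinal} (ha : ¬ IsSuccLimit a) (hb : ¬ IsSuccLimit b)
    (hab : a + y < b) (hN : b + y ≤ N) :
    ∃ φ : {o : Ordinal // o ≤ N} ≃ₜ {o : Ordinal // o ≤ N},
      (∀ e : {o : Ordinal // o ≤ N}, (e : Ordinal) = a + y → ((φ e : _) : Ordinal) = b + y) ∧
      (∀ e : {o : Ordinal // o ≤ N}, (e : Ordinal) ∉ Icc a (a + y) → (e : Ordinal) ∉ Icc b (b + y) → φ e = e) ∧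
      (∀ e, φ (φ e) = e) := by
  classical
  let F : Ordinal → Ordinal := fun x => if x ∈ Icc a (a + y) then b + (x - a) else
    if x ∈ Icc b (b + y) then a + (x - b) else x
  have h1 : ∀ t ≤ y, F (a + t) = b + t := by
    intro t ht
    have : a + t ∈ Icc a (a + y) := ⟨le_self_add, by gcongr⟩
    simp only [F, if_pos this, Ordinal.add_sub_cancel]
  have h2 : ∀ t ≤ y, F (b + t) = a + t := by
    intro t ht
    have h : b + t ∈ Icc b (b + y) := ⟨le_self_add, by gcongr⟩
    have h' : b + t ∉ Icc a (a + y) := fun h' => absurd (h.1.trans h'.2) (not_le.2 hab)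
    simp only [F, if_neg h', if_pos h, Ordinal.add_sub_cancel]
  have h3 : ∀ x, x ∉ Icc a (a + y) → x ∉ Icc b (b + y) → F x = x := by
    intro x hx hx'
    simp only [F, if_neg hx, if_neg hx']
  have h4 : ∀ (c x : Ordinal), x ∈ Icc c (c + y) → ∃ t ≤ y, x = c + t := by
    intro c x hx
    exact ⟨x - c, Ordinal.sub_le.2 hx.2, (Ordinal.add_sub_cancel_of_le hx.1).symm⟩
  have hFF : ∀ x, F (F x) = x := by
    intro x
    by_cases hx : x ∈ Icc a (a + y)
    · obtain ⟨t, ht, rfl⟩ := h4 _ _ hx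
      rw [h1 t ht, h2 t ht]
    by_cases hx' : x ∈ Icc b (b + y)
    · obtain ⟨t, ht, rfl⟩ := h4 _ _ hx'
      rw [h2 t ht, h1 t ht]
    rw [h3 x hx hx', h3 x hx hx']
  have hFN : ∀ x ≤ N, F x ≤ N := by
    intro x hxN
    by_cases hx : x ∈ Icc a (a + y)
    · obtain ⟨t, ht, rfl⟩ := h4 _ _ hx
      rw [h1 t ht]
      exact le_trans (by gcongr) hN
    by_cases hx' : x ∈ Icc b (b + y)
    · obtain ⟨t, ht, rfl⟩ := h4 _ _ hx'
      rw [h2 t ht]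
      have : a + t ≤ a + y := by gcongr
      exact (this.trans hab.le).trans (le_self_add.trans hN)
    rwa [h3 x hx hx']
  have hFc : Continuous F := by
    refine Continuous.if ?_ (aux_shift a b) (Continuous.if ?_ (aux_shift b a) continuous_id)
    · intro x hx
      have : x ∈ frontier (Icc a (a + y)) := hx
      rw [(aux_clopen ha).frontier_eq] at this
      exact this.elim
    · intro x hx
      have : x ∈ frontier (Icc b (b + y)) := hx
      rw [(aux_clopen hb).frontier_eq] at this
      exact this.elim
  let G : {o : Ordinal // o ≤ N} → {o : Ordinal // o ≤ N} := fun e => ⟨F e, hFN e e.2⟩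
  have hG : ∀ e, G (G e) = e := fun e => Subtype.ext (hFF e)
  have hGc : Continuous G := (hFc.comp continuous_subtype_val).subtype_mk _
  refine ⟨⟨⟨G, G, hG, hG⟩, hGc, hGc⟩, ?_, ?_, hG⟩
  · intro e he
    change F e = _
    rw [he, h1 y le_rfl]
  · intro e he he'
    exact Subtype.ext (h3 _ he he')

open Set Order Ordinal in
/-- the set of points `W * k`, `k ≥ 1` -/
def auxMax (W N : Ordinal) : Set {o : Ordinal // o ≤ N} :=
  {e | ∃ k : ℕ, 1 ≤ k ∧ (e : Ordinal) = W * k}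

open Set Order Ordinal in
/-- Points outside the maximal set decompose well. -/
theorem aux_decomp {α : Ordinal} (hα1 : 1 ≤ α) {n : ℕ} (hn : 1 ≤ n)
    (x : {o : Ordinal // o ≤ ω ^ α * n}) (hx : x ∉ auxMax (ω ^ α) (ω ^ α * n)) :
    ∃ (q : ℕ) (a y : Ordinal), q < n ∧ ¬ IsSuccLimit a ∧ (x : Ordinal) = a + y ∧
      y < ω ^ α ∧ ω ^ α * q ≤ a ∧ (1 ≤ q → ω ^ α * q < a) ∧ a + y < ω ^ α * (q + 1 : ℕ) := by
  obtain ⟨x, hxN⟩ := x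
  have hW : (ω ^ α : Ordinal) ≠ 0 := (Ordinal.opow_pos _ omega0_pos).ne'
  have hxlt : x < ω ^ α * n := lt_of_le_of_ne hxN (fun h => hx ⟨n, hn, h⟩)
  have hq : x / ω ^ α < n := (Ordinal.div_lt hW).2 hxlt
  obtain ⟨q, hqe⟩ := Ordinal.lt_omega0.1 (hq.trans (Ordinal.natCast_lt_omega0 n))
  have hqn : q < n := by rw [hqe] at hq; exact_mod_cast hq
  have hdm := Ordinal.div_add_mod x (ω ^ α)
  have hr := Ordinal.mod_lt x hW
  set r := x % ω ^ α with hrdef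
  rw [hqe] at hdm
  have hlt : x < ω ^ α * (q + 1 : ℕ) := by
    rw [← hdm]; push_cast; rw [mul_add, mul_one]; gcongr
  rcases Nat.eq_zero_or_pos q with h0 | h0
  · subst h0
    refine ⟨0, 0, x, hqn, by simp, by simp, ?_, by simp, by simp, by simpa using hlt⟩
    simpa using hlt
  · have hr0 : r ≠ 0 := by
      intro h
      rw [h, add_zero] at hdm
      exact hx ⟨q, h0, hdm.symm⟩
    have hr1 : 1 + (r - 1) = r := Ordinal.add_sub_cancel_of_le (Ordinal.one_le_iff_ne_zero.2 hr0)
    have hxe : x = ω ^ α * q + 1 + (r - 1) := by rw [add_assoc, hr1, hdm]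
    refine ⟨q, ω ^ α * q + 1, r - 1, hqn, ?_, hxe, lt_of_le_of_lt (Ordinal.sub_le_self _ _) hr, 
      le_self_add, fun _ => ?_, by rw [← hxe]; exact hlt⟩
    · rw [← succ_eq_add_one]; exact not_isSuccLimit_succ _
    · rw [← succ_eq_add_one]; exact lt_succ _

open Set Order Ordinal in
theorem aux_notMax {W N l : Ordinal} {q : ℕ} (hW : 0 < W) (e : {o : Ordinal // o ≤ N})
    (he : e ∈ auxMax W N) (h1 : W * q ≤ l) (h1' : 1 ≤ q → W * q < l) (h2 : l ≤ e)
    (h3 : (e : Ordinal) < W * (q + 1 : ℕ)) : False := by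
  obtain ⟨k, hk, hke⟩ := he
  rw [hke] at h2 h3
  have hkq : k < q + 1 := by
    have := (mul_lt_mul_iff_right₀ hW).1 h3
    exact_mod_cast this
  have hqk : W * q < W * k := by
    rcases Nat.eq_zero_or_pos q with h0 | h0
    · subst h0
      simp only [Nat.cast_zero, mul_zero]
      exact mul_pos hW (by exact_mod_cast hk)
    · exact (h1' h0).trans_le h2
  have : q < k := by
    have := (mul_lt_mul_iff_right₀ hW).1 hqk
    exact_mod_cast this
  omega

open Set Order Ordinal in
theorem aux_main {α : Ordinal} (hα1 : 1 ≤ α) {n : ℕ} (hn : 1 ≤ n)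
    (𝒮 : Finset (Set {o : Ordinal // o ≤ ω ^ α * n}))
    (hne : ∀ P ∈ 𝒮, P.Nonempty)
    (hclosed : ∀ P ∈ 𝒮, IsClosed P)
    (hinv : ∀ φ : {o : Ordinal // o ≤ ω ^ α * n} ≃ₜ {o : Ordinal // o ≤ ω ^ α * n},
      ∀ P ∈ 𝒮, (φ : _ → _) '' P ∈ 𝒮) (P) (hP : P ∈ 𝒮) :
    ∃ e ∈ P, e ∈ auxMax (ω ^ α) (ω ^ α * n) := by
  classical
  by_contra! hcon
  obtain ⟨x, hxP⟩ := hne P hP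
  obtain ⟨q, a, y, hqn, ha, hxe, hy, hqa, hqa', hlt⟩ := aux_decomp hα1 hn x (hcon x hxP)
  have hW : (0 : Ordinal) < ω ^ α := Ordinal.opow_pos _ omega0_pos
  have hWl : IsSuccLimit (ω ^ α : Ordinal) :=
    Ordinal.isSuccLimit_opow_left isSuccLimit_omega0 (by rintro rfl; simp at hα1)
  set M : Ordinal := ω ^ α * (q + 1 : ℕ) with hM
  have hMs : M = ω ^ α * q + ω ^ α := by rw [hM]; push_cast; rw [mul_add, mul_one]
  have hMl : IsSuccLimit M := by rw [hMs]; exact Ordinal.isSuccLimit_add _ hWl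
  have hMN : M ≤ ω ^ α * n := by
    rw [hM]; gcongr; exact_mod_cast hqn
  let T := 𝒮.filter (fun Q => ∀ e ∈ Q, e ∉ auxMax (ω ^ α) (ω ^ α * n))
  let C : Set {o : Ordinal // o ≤ ω ^ α * n} := ⋃ Q ∈ T, Q
  have hC : IsClosed C := by
    refine T.finite_toSet.isClosed_biUnion (fun Q hQ => hclosed Q ?_)
    exact (Finset.mem_filter.1 hQ).1
  have hC' : IsClosed (Subtype.val '' C) :=
    (isClosed_Iic (a := (ω ^ α * n : Ordinal))).isClosedEmbedding_subtypeVal.isClosedMap _ hC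
  have hMC : M ∈ (Subtype.val '' C)ᶜ := by
    rintro ⟨e, he, heM⟩
    simp only [C, mem_iUnion] at he
    obtain ⟨Q, hQ, heQ⟩ := he
    exact (Finset.mem_filter.1 hQ).2 e heQ ⟨q + 1, by omega, heM⟩
  obtain ⟨c, hcM, hc⟩ := SuccOrder.isOpen_iff.1 hC'.isOpen_compl M hMC hMl
  set d := max c (a + y) with hd
  have hdM : d < M := max_lt hcM hlt
  have hbM : succ d < M := hMl.succ_lt hdM
  have hab : a + y < succ d := (le_max_right _ _).trans_lt (lt_succ d)
  have hqb : ω ^ α * q < succ d := (hqa.trans le_self_add).trans_lt hab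
  have hbyM : succ d + y < M := by
    have : succ d = ω ^ α * q + (succ d - ω ^ α * q) :=
      (Ordinal.add_sub_cancel_of_le hqb.le).symm
    rw [this, hMs, add_assoc]
    have ht : succ d - ω ^ α * q < ω ^ α := by
      rw [Ordinal.sub_lt_of_le hqb.le, ← hMs]; exact hbM
    have := Ordinal.isPrincipal_add_omega0_opow α ht hy
    gcongr
  obtain ⟨φ, hφ1, hφ2, hφ3⟩ := aux_swap ha (not_isSuccLimit_succ d) hab (hbyM.le.trans hMN)
  have hφM : ∀ e ∈ auxMax (ω ^ α) (ω ^ α * n), φ e = e := by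
    intro e he
    refine hφ2 e (fun h => ?_) (fun h => ?_)
    · exact aux_notMax hW e he hqa hqa' h.1 (h.2.trans_lt hlt)
    · exact aux_notMax hW e he hqb.le (fun _ => hqb) h.1 (h.2.trans_lt hbyM)
  have hQT : (φ : _ → _) '' P ∈ T := by
    refine Finset.mem_filter.2 ⟨hinv φ P hP, ?_⟩
    rintro _ ⟨e, heP, rfl⟩ he
    have := hφM _ he
    rw [hφ3] at this
    rw [← this] at he
    exact hcon e heP he
  have hin : ((φ x : _) : Ordinal) ∈ Subtype.val '' C :=
    ⟨φ x, mem_biUnion hQT (mem_image_of_mem _ hxP), rfl⟩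
  rw [hφ1 x hxe] at hin
  refine hc ⟨?_, hbyM⟩ hin
  exact ((le_max_left _ _).trans_lt (lt_succ d)).trans_le le_self_add


/-- Topological content of the paper's Lemma on countable end spaces (upper bound):
in the ordinal space `[0, ω^α · n]` (a countable compact Hausdorff space with
characteristic system `(α, n)`), any finite homeomorphism-invariant collection of
pairwise disjoint, nonempty, closed, proper subsets has at most `n` members. -/
theorem invariant_collection_card_le {α : Ordinal} (hα1 : 1 ≤ α)
    (hαc : α.card ≤ Cardinal.aleph0) {n : ℕ} (hn : 1 ≤ n)
    (𝒮 : Finset (Set {o : Ordinal // o ≤ Ordinal.omega0 ^ α * n}))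
    (hdisj : ∀ P ∈ 𝒮, ∀ Q ∈ 𝒮, P ≠ Q → Disjoint P Q)
    (hne : ∀ P ∈ 𝒮, P.Nonempty)
    (hclosed : ∀ P ∈ 𝒮, IsClosed P)
    (hproper : ∀ P ∈ 𝒮, P ≠ Set.univ)
    (hinv : ∀ φ : {o : Ordinal // o ≤ Ordinal.omega0 ^ α * n} ≃ₜ
        {o : Ordinal // o ≤ Ordinal.omega0 ^ α * n},
      ∀ P ∈ 𝒮, (φ : _ → _) '' P ∈ 𝒮) :
    𝒮.card ≤ n := by
  classical
  have key := aux_main hα1 hn 𝒮 hne hclosed hinv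
  have key' : ∀ P ∈ 𝒮, ∃ k ∈ Finset.Icc 1 n, ∃ e ∈ P, (e : Ordinal) = Ordinal.omega0 ^ α * k := by
    intro P hP
    obtain ⟨e, heP, k, hk, he⟩ := key P hP
    refine ⟨k, Finset.mem_Icc.2 ⟨hk, ?_⟩, e, heP, he⟩
    have h := e.2
    rw [he] at h
    have := (mul_le_mul_iff_right₀ (Ordinal.opow_pos α Ordinal.omega0_pos)).1 h
    exact_mod_cast this
  choose! f hf hf' using key'
  have hcard : 𝒮.card ≤ (Finset.Icc 1 n).card := by
    refine Finset.card_le_card_of_injOn f hf ?_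
    intro P hP Q hQ hPQ
    by_contra hne'
    obtain ⟨e, heP, he⟩ := hf' P hP
    obtain ⟨e', heQ, he'⟩ := hf' Q hQ
    have hee : e = e' := Subtype.ext (by rw [he, he', hPQ])
    subst hee
    exact Set.disjoint_left.1 (hdisj P hP Q hQ hne') heP heQ
  simpa using hcard
end

section
/- Let α be an ordinal with α ≥ 1 and let n ≥ 1 be a natural number. Every homeomorphism φ of the ordinal space E = [0, ω^α · n] (the set of ordinals ≤ ω^α · n with its order topology) maps the finite set {ω^α · k : 1 ≤ k ≤ n} bijectively onto itself. -/
open Ordinal Order Topology Filter in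
theorem trp_acc_sub {c : Ordinal} (S : Set {o : Ordinal // o ≤ c}) (x : {o : Ordinal // o ≤ c}) :
    AccPt x (𝓟 S) ↔ x.1 ≠ 0 ∧ ∀ b < x.1, ∃ z ∈ S, b < z.1 ∧ z.1 < x.1 := by
  have h1 : AccPt x (𝓟 S) ↔ AccPt x.1 (𝓟 (Subtype.val '' S)) := by
    constructor
    · intro h
      have := h.map (f := Subtype.val) continuous_subtype_val.continuousAt Subtype.val_injective
      rwa [map_principal] at this
    · intro h
      rw [accPt_iff_nhds] at h ⊢
      intro U hU
      rw [nhds_subtype_eq_comap, mem_comap] at hU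
      obtain ⟨V, hV, hVU⟩ := hU
      obtain ⟨y, ⟨hy, z, hz, rfl⟩, hne⟩ := h V hV
      exact ⟨z, ⟨hVU hy, hz⟩, fun e => hne (by rw [e])⟩
  rw [h1, SuccOrder.accPt_principal]
  constructor
  · rintro ⟨h0, h⟩
    refine ⟨by simpa using h0, fun b hb => ?_⟩
    obtain ⟨y, ⟨z, hz, rfl⟩, h2⟩ := h b hb
    exact ⟨z, hz, h2⟩
  · rintro ⟨h0, h⟩
    refine ⟨by simpa using h0, fun b hb => ?_⟩
    obtain ⟨z, hz, h2⟩ := h b hb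
    exact ⟨z.1, ⟨z, hz, rfl⟩, h2⟩

/-- Points of rank at least `β`. -/
def trpSet (c β : Ordinal) : Set {o : Ordinal // o ≤ c} :=
  {x | Ordinal.omega0 ^ β ∣ x.1 ∧ (β = 0 ∨ x.1 ≠ 0)}

open Ordinal Order Topology Filter in
theorem trp_acc_iff {c γ : Ordinal} (x : {o : Ordinal // o ≤ c}) :
    AccPt x (𝓟 (trpSet c γ)) ↔ x.1 ≠ 0 ∧ ω ^ (succ γ) ∣ x.1 := by
  rw [trp_acc_sub]
  have hp : 0 < ω ^ γ := opow_pos _ omega0_pos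
  refine and_congr_right fun hx => ?_
  obtain ⟨x, hxc⟩ := x
  dsimp only at *
  rw [opow_succ]
  constructor
  · intro h
    have hr : x % ω ^ γ = 0 := by
      by_contra hr
      have hlt : ω ^ γ * (x / ω ^ γ) < x := by
        conv_rhs => rw [← div_add_mod x (ω ^ γ)]
        exact lt_add_of_pos_right _ (pos_iff_ne_zero.2 hr)
      obtain ⟨⟨z, hz⟩, ⟨⟨m, hm⟩, -⟩, h2, h3⟩ := h _ hlt
      dsimp only at *
      subst hm
      have h4 := (mul_lt_mul_iff_right₀ hp).1 h2
      have h5 : ω ^ γ * succ (x / ω ^ γ) ≤ ω ^ γ * m := mul_le_mul_right (succ_le_of_lt h4) _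
      exact absurd ((lt_mul_succ_div x hp.ne').trans_le h5) h3.not_gt
    obtain ⟨q, rfl⟩ := dvd_of_mod_eq_zero hr
    refine mul_dvd_mul_left _ (isSuccPrelimit_iff_omega0_dvd.1 ?_)
    intro p hpq
    obtain ⟨⟨z, hz⟩, ⟨⟨m, hm⟩, -⟩, h2, h3⟩ := h (ω ^ γ * p) ((mul_lt_mul_iff_right₀ hp).2 hpq.1)
    dsimp only at *
    subst hm
    exact hpq.2 ((mul_lt_mul_iff_right₀ hp).1 h2) ((mul_lt_mul_iff_right₀ hp).1 h3)
  · rintro ⟨q, rfl⟩ b hb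
    have hlim : IsSuccPrelimit (ω * q) := isSuccPrelimit_iff_omega0_dvd.2 ⟨q, rfl⟩
    have h1 : b < ω ^ γ * succ (b / ω ^ γ) := lt_mul_succ_div b hp.ne'
    rw [mul_assoc] at hb
    have h2 : succ (b / ω ^ γ) < ω * q :=
      hlim.succ_lt ((lt_mul_iff_div_lt hp.ne').1 hb)
    have h3 : ω ^ γ * succ (b / ω ^ γ) < ω ^ γ * ω * q := by
      rw [mul_assoc]; exact (mul_lt_mul_iff_right₀ hp).2 h2
    exact ⟨⟨_, h3.le.trans hxc⟩, ⟨⟨_, rfl⟩, Or.inr (bot_le.trans_lt h1).ne'⟩, h1, h3⟩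

open Ordinal Order Topology Filter in
theorem trp_mem_iff {c β : Ordinal} (x : {o : Ordinal // o ≤ c}) :
    x ∈ trpSet c β ↔ ∀ γ < β, AccPt x (𝓟 (trpSet c γ)) := by
  simp only [trp_acc_iff]
  rcases eq_or_ne β 0 with rfl | hβ
  · simp [trpSet]
  constructor
  · rintro ⟨h1, h2⟩ γ hγ
    exact ⟨h2.resolve_left hβ, (opow_dvd_opow _ (succ_le_of_lt hγ)).trans h1⟩
  · intro h
    refine ⟨?_, Or.inr (h 0 (pos_iff_ne_zero.2 hβ)).1⟩
    obtain ⟨x, hxc⟩ := x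
    dsimp only at *
    rcases zero_or_succ_or_isSuccLimit β with rfl | ⟨γ, rfl⟩ | hl
    · exact absurd rfl hβ
    · exact (h γ (lt_succ γ)).2
    · apply dvd_of_mod_eq_zero
      by_contra hr
      have hp : ω ^ β ≠ 0 := (opow_pos _ omega0_pos).ne'
      refine (mod_lt x hp).not_ge ?_
      rw [opow_le_of_isSuccLimit omega0_ne_zero hl]
      intro γ hγ
      refine le_of_dvd hr ?_
      have h1 : ω ^ γ ∣ x := (opow_dvd_opow _ (le_succ γ)).trans (h γ hγ).2
      rw [← div_add_mod x (ω ^ β)] at h1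
      exact (dvd_add_iff ((opow_dvd_opow _ hγ.le).mul_right _)).1 h1

open Ordinal Order Topology Filter in
theorem trp_homeo {c : Ordinal} (φ : {o : Ordinal // o ≤ c} ≃ₜ {o : Ordinal // o ≤ c})
    (β : Ordinal) : ∀ x, φ x ∈ trpSet c β ↔ x ∈ trpSet c β := by
  induction β using WellFoundedLT.induction with
  | ind β ih =>
    intro x
    rw [trp_mem_iff, trp_mem_iff]
    refine forall₂_congr fun γ hγ => ?_
    constructor
    · intro h
      have := h.map (f := φ.symm) φ.symm.continuous.continuousAt φ.symm.injective
      rw [map_principal, φ.symm_apply_apply] at this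
      refine this.mono (principal_mono.2 ?_)
      rintro _ ⟨y, hy, rfl⟩
      rw [← ih γ hγ, φ.apply_symm_apply]
      exact hy
    · intro h
      have := h.map (f := φ) φ.continuous.continuousAt φ.injective
      rw [map_principal] at this
      refine this.mono (principal_mono.2 ?_)
      rintro _ ⟨y, hy, rfl⟩
      exact (ih γ hγ y).2 hy

open Ordinal Order in
theorem trp_eq {α : Ordinal} (hα : 1 ≤ α) (n : ℕ) :
    {x : {o : Ordinal // o ≤ Ordinal.omega0 ^ α * n} |
          ∃ k : ℕ, 1 ≤ k ∧ k ≤ n ∧ (x : Ordinal) = Ordinal.omega0 ^ α * k} =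
      trpSet (Ordinal.omega0 ^ α * n) α := by
  have hp : 0 < ω ^ α := opow_pos _ omega0_pos
  ext ⟨x, hx⟩
  constructor
  · rintro ⟨k, hk1, hk2, h⟩
    dsimp only at h
    subst h
    refine ⟨⟨_, rfl⟩, Or.inr ?_⟩
    have : (k : Ordinal) ≠ 0 := by exact_mod_cast (by omega : k ≠ 0)
    exact mul_ne_zero hp.ne' this
  · rintro ⟨⟨m, hm⟩, h0⟩
    have h0 := h0.resolve_left (by rintro rfl; simp at hα)
    dsimp only at *
    subst hm
    have hmn : m ≤ n := (mul_le_mul_iff_right₀ hp).1 hx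
    obtain ⟨k, rfl⟩ := lt_omega0.1 (hmn.trans_lt (natCast_lt_omega0 n))
    refine ⟨k, ?_, by exact_mod_cast hmn, rfl⟩
    rcases Nat.eq_zero_or_pos k with rfl | h
    · simp at h0
    · exact h

/-- Supporting claim for the lower bound of the paper's Lemma on countable end spaces:
every homeomorphism of the ordinal space `[0, ω^α · n]` maps the finite set
`{ω^α · k : 1 ≤ k ≤ n}` (the points of maximal Cantor–Bendixson rank) bijectively
onto itself. -/
theorem homeomorph_preserves_top_rank_points {α : Ordinal} (hα : 1 ≤ α)
    {n : ℕ} (hn : 1 ≤ n)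
    (φ : {o : Ordinal // o ≤ Ordinal.omega0 ^ α * n} ≃ₜ
      {o : Ordinal // o ≤ Ordinal.omega0 ^ α * n}) :
    (φ : _ → _) ''
        {x : {o : Ordinal // o ≤ Ordinal.omega0 ^ α * n} |
          ∃ k : ℕ, 1 ≤ k ∧ k ≤ n ∧ (x : Ordinal) = Ordinal.omega0 ^ α * k} =
      {x : {o : Ordinal // o ≤ Ordinal.omega0 ^ α * n} |
          ∃ k : ℕ, 1 ≤ k ∧ k ≤ n ∧ (x : Ordinal) = Ordinal.omega0 ^ α * k} := by
  rw [trp_eq hα n]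
  ext y
  constructor
  · rintro ⟨x, hx, rfl⟩
    exact (trp_homeo φ α x).2 hx
  · intro hy
    refine ⟨φ.symm y, ?_, φ.apply_symm_apply y⟩
    rw [← trp_homeo φ, φ.apply_symm_apply]
    exact hy
end
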